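/- Let Ω ⊂ ℝ^N be open and bounded with 0 ∈ Ω, N ≥ 2, 1 < q < N, and let a: closure(Ω) → [0,∞) be continuous with a(λx) ≤ a(x) for all λ ∈ (0,1] and x ∈ closure(Ω). Then for every u ∈ C_0^∞(Ω): ∫_Ω a(x) |u(x)|^q / |x|^q dx ≤ (q/(N-q))^q ∫_Ω a(x) |∇u(x)|^q dx. -/

import Mathlib

open MeasureTheory Set

theorem hardy_pow {N q : ℝ} (hq1 : 0 < q) (hqN : q < N) :
    ∫⁻ t in Ioi (1:ℝ), ENNReal.ofReal (t ^ (-(N/q))) = ENNReal.ofReal (q / (N - q)) := by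
  have h1 : -(N/q) < -1 := by
    have : 1 < N / q := by rw [lt_div_iff₀ hq1]; linarith
    linarith
  rw [← ofReal_integral_eq_lintegral_ofReal (integrableOn_Ioi_rpow_of_lt h1 one_pos),
    integral_Ioi_rpow_of_lt h1 one_pos]
  · congr 1
    have : N - q ≠ 0 := by linarith
    have h3 : -(N/q) + 1 ≠ 0 := by linarith
    have h4 : -(N/q) + 1 = -((N - q)/q) := by field_simp; ring
    rw [h4, Real.one_rpow]
    field_simp
  · refine (ae_restrict_iff' measurableSet_Ioi).2 (.of_forall fun t ht => ?_)
    exact Real.rpow_nonneg (by linarith [mem_Ioi.1 ht]) _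

theorem hardy_holder {N q : ℝ} (hq1 : 1 < q) (hqN : q < N) (h : ℝ → ENNReal) (hh : Measurable h) :
    (∫⁻ t in Ioi (1:ℝ), h t ^ (1/q)) ^ q ≤ ENNReal.ofReal (q / (N - q)) ^ (q - 1) *
      ∫⁻ t in Ioi (1:ℝ), ENNReal.ofReal (t ^ (N - N/q)) * h t := by
  have hq0 : 0 < q := by linarith
  have key := ENNReal.lintegral_mul_norm_pow_le (μ := volume.restrict (Ioi (1:ℝ)))
    (f := fun t => ENNReal.ofReal (t ^ (-(N/q)))) (g := fun t => ENNReal.ofReal (t ^ (N - N/q)) * h t)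
    (by fun_prop) (by fun_prop) (p := (q-1)/q) (q := 1/q) (div_nonneg (by linarith) hq0.le) (by positivity) (by field_simp; ring)
  rw [hardy_pow hq0 hqN] at key
  have e : ∫⁻ t in Ioi (1:ℝ), h t ^ (1/q) = ∫⁻ t in Ioi (1:ℝ), ENNReal.ofReal (t ^ (-(N/q))) ^ ((q-1)/q) *
      (ENNReal.ofReal (t ^ (N - N/q)) * h t) ^ (1/q) := by
    refine setLIntegral_congr_fun measurableSet_Ioi fun t ht => ?_
    have ht0 : 0 < t := by linarith [mem_Ioi.1 ht]
    rw [ENNReal.mul_rpow_of_nonneg _ _ (by positivity), ← mul_assoc,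
      ENNReal.ofReal_rpow_of_pos (by positivity), ENNReal.ofReal_rpow_of_pos (by positivity),
      ← ENNReal.ofReal_mul (by positivity), ← Real.rpow_mul ht0.le, ← Real.rpow_mul ht0.le,
      ← Real.rpow_add ht0]
    have : -(N/q) * ((q-1)/q) + (N - N/q) * (1/q) = 0 := by field_simp; ring
    rw [this]; simp
  rw [e]
  refine (ENNReal.rpow_le_rpow key hq0.le).trans_eq ?_
  rw [ENNReal.mul_rpow_of_nonneg _ _ hq0.le, ← ENNReal.rpow_mul, ← ENNReal.rpow_mul,
    div_mul_cancel₀ _ hq0.ne', div_mul_cancel₀ _ hq0.ne', ENNReal.rpow_one]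

theorem hardy_scale {N : ℕ} (G : EuclideanSpace ℝ (Fin N) → ENNReal) (hG : Measurable G) {t : ℝ} (ht : 0 < t) :
    ∫⁻ x, G (t • x) = ENNReal.ofReal (t ^ (-(N:ℝ))) * ∫⁻ x, G x := by
  have := lintegral_map (μ := volume) hG (measurable_const_smul t)
  rw [← this, Measure.map_addHaar_smul _ ht.ne', lintegral_smul_measure, smul_eq_mul]
  congr 2
  rw [abs_of_pos (by positivity), Real.rpow_neg ht.le]
  simp

theorem hardy_ray {N : ℕ} (u : EuclideanSpace ℝ (Fin N) → ℝ) (husm : ContDiff ℝ (⊤ : ℕ∞) u)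
    (husupp : HasCompactSupport u) (x : EuclideanSpace ℝ (Fin N)) (hx : x ≠ 0) :
    ‖u x‖ₑ ≤ ∫⁻ t in Ioi (1:ℝ), ‖fderiv ℝ u (t • x)‖ₑ * ‖x‖ₑ := by
  have hd : ∀ t : ℝ, HasDerivAt (fun t : ℝ => u (t • x)) (fderiv ℝ u (t • x) x) t := by
    intro t
    have h1 : HasFDerivAt u (fderiv ℝ u (t • x)) (t • x) :=
      (husm.differentiable (by simp) _).hasFDerivAt
    have h2 : HasDerivAt (fun t : ℝ => t • x) x t := by
      simpa using (hasDerivAt_id t).smul_const x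
    exact h1.comp_hasDerivAt t h2
  have hc : HasCompactSupport (fun t : ℝ => u (t • x)) :=
    husupp.comp_isClosedEmbedding (isClosedEmbedding_smul_left hx)
  have hsm : ContDiff ℝ 1 (fun t : ℝ => u (t • x)) :=
    (husm.of_le (by simp)).comp (contDiff_id.smul contDiff_const)
  have h := hc.integral_Ioi_deriv_eq hsm 1
  have h' : ‖u x‖ₑ = ‖∫ t in Ioi (1:ℝ), deriv (fun t : ℝ => u (t • x)) t‖ₑ := by
    rw [h]; simp
  rw [h']
  refine (enorm_integral_le_lintegral_enorm _).trans (lintegral_mono fun t => ?_)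
  rw [(hd t).deriv]
  exact ContinuousLinearMap.le_opENorm _ _

theorem weighted_hardy_inequality (N : ℕ) (hN : 2 ≤ N)
    (Ω : Set (EuclideanSpace ℝ (Fin N))) (hΩopen : IsOpen Ω)
    (hΩbdd : Bornology.IsBounded Ω) (h0 : (0 : EuclideanSpace ℝ (Fin N)) ∈ Ω)
    (q : ℝ) (hq1 : 1 < q) (hqN : q < N)
    (a : EuclideanSpace ℝ (Fin N) → ℝ) (haco : ContinuousOn a (closure Ω))
    (hapos : ∀ x ∈ closure Ω, 0 ≤ a x)
    (hamono : ∀ l : ℝ, l ∈ Set.Ioc (0 : ℝ) 1 → ∀ x ∈ closure Ω, a (l • x) ≤ a x)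
    (u : EuclideanSpace ℝ (Fin N) → ℝ) (husm : ContDiff ℝ (⊤ : ℕ∞) u)
    (husupp : HasCompactSupport u) (hsupp : tsupport u ⊆ Ω) :
    ∫ x in Ω, a x * |u x| ^ q / ‖x‖ ^ q ≤
      (q / (N - q)) ^ q * ∫ x in Ω, a x * ‖fderiv ℝ u x‖ ^ q := by
  have hq0 : 0 < q := by linarith
  have hK : 0 < q / ((N:ℝ) - q) := div_pos hq0 (by linarith)
  have hfc : Continuous (fderiv ℝ u) := husm.continuous_fderiv (by simp)
  have hcont : ContinuousOn (fun x => a x * ‖fderiv ℝ u x‖ ^ q) (closure Ω) :=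
    haco.mul ((hfc.norm.rpow_const fun _ => Or.inr hq0.le).continuousOn)
  have hint : IntegrableOn (fun x => a x * ‖fderiv ℝ u x‖ ^ q) Ω :=
    (hcont.integrableOn_compact hΩbdd.isCompact_closure).mono_set subset_closure
  have hnn : ∀ x ∈ Ω, 0 ≤ a x * ‖fderiv ℝ u x‖ ^ q := fun x hx =>
    mul_nonneg (hapos x (subset_closure hx)) (by positivity)
  set G : EuclideanSpace ℝ (Fin N) → ENNReal :=
    Ω.indicator (fun x => ENNReal.ofReal (a x * ‖fderiv ℝ u x‖ ^ q)) with hGdef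
  have hGm : Measurable G := by
    have h1 : Measurable (Ω.indicator (fun x => a x * ‖fderiv ℝ u x‖ ^ q)) := by
      classical
      rw [← Set.piecewise_eq_indicator]
      exact (hcont.mono subset_closure).measurable_piecewise continuousOn_const hΩopen.measurableSet
    have h2 : G = fun x => ENNReal.ofReal (Ω.indicator (fun x => a x * ‖fderiv ℝ u x‖ ^ q) x) := by
      ext x
      by_cases hx : x ∈ Ω <;> simp [hGdef, hx]
    rw [h2]; exact h1.ennreal_ofReal
  have hGint : ∫⁻ x, G x = ENNReal.ofReal (∫ x in Ω, a x * ‖fderiv ℝ u x‖ ^ q) := by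
    rw [ofReal_integral_eq_lintegral_ofReal hint
      ((ae_restrict_iff' hΩopen.measurableSet).2 (.of_forall hnn)),
      lintegral_indicator hΩopen.measurableSet]
  -- pointwise bound
  have hpt : ∀ x ∈ Ω, ENNReal.ofReal (a x * |u x| ^ q / ‖x‖ ^ q) ≤
      (∫⁻ t in Ioi (1:ℝ), G (t • x) ^ (1/q)) ^ q := by
    intro x hx
    rcases eq_or_ne x 0 with rfl | hx0
    · simp [Real.zero_rpow hq0.ne']
    have hxn : 0 < ‖x‖ := norm_pos_iff.2 hx0
    have hax := hapos x (subset_closure hx)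
    have hray := hardy_ray u husm husupp x hx0
    have e1 : ENNReal.ofReal (a x * |u x| ^ q / ‖x‖ ^ q) =
        (ENNReal.ofReal (a x ^ (1/q)) * ‖u x‖ₑ * (‖x‖ₑ)⁻¹) ^ q := by
      rw [← ofReal_norm, ← ofReal_norm, ← ENNReal.ofReal_inv_of_pos hxn, Real.norm_eq_abs,
        ← ENNReal.ofReal_mul (by positivity), ← ENNReal.ofReal_mul (by positivity),
        ENNReal.ofReal_rpow_of_nonneg (by positivity) hq0.le,
        Real.mul_rpow (by positivity) (by positivity), Real.mul_rpow (by positivity) (by positivity),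
        ← Real.rpow_mul hax, one_div_mul_cancel hq0.ne', Real.rpow_one, Real.inv_rpow hxn.le,
        div_eq_mul_inv]
    rw [e1]
    refine ENNReal.rpow_le_rpow ?_ hq0.le
    rw [← div_eq_mul_inv]
    refine ENNReal.div_le_of_le_mul ?_
    calc ENNReal.ofReal (a x ^ (1/q)) * ‖u x‖ₑ
        ≤ ENNReal.ofReal (a x ^ (1/q)) * ∫⁻ t in Ioi (1:ℝ), ‖fderiv ℝ u (t • x)‖ₑ * ‖x‖ₑ := by
          gcongr
      _ = ∫⁻ t in Ioi (1:ℝ), ENNReal.ofReal (a x ^ (1/q)) * (‖fderiv ℝ u (t • x)‖ₑ * ‖x‖ₑ) := by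
          rw [lintegral_const_mul' _ _ ENNReal.ofReal_ne_top]
      _ ≤ ∫⁻ t in Ioi (1:ℝ), G (t • x) ^ (1/q) * ‖x‖ₑ := by
          refine setLIntegral_mono' measurableSet_Ioi fun t ht => ?_
          have ht1 : 1 < t := ht
          have ht0 : 0 < t := by linarith
          rw [← mul_assoc]
          gcongr
          by_cases htx : t • x ∈ Ω
          · have hm := hamono t⁻¹ ⟨by positivity, inv_le_one_of_one_le₀ ht1.le⟩ (t • x)
              (subset_closure htx)
            rw [inv_smul_smul₀ ht0.ne'] at hm
            have ha2 : 0 ≤ a (t • x) := hax.trans hm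
            have : G (t • x) = ENNReal.ofReal (a (t • x) * ‖fderiv ℝ u (t • x)‖ ^ q) := by
              simp [hGdef, htx]
            rw [this, ENNReal.ofReal_rpow_of_nonneg (hnn _ htx) (by positivity),
              Real.mul_rpow ha2 (by positivity), ← Real.rpow_mul (norm_nonneg _),
              mul_one_div_cancel hq0.ne', Real.rpow_one, ENNReal.ofReal_mul (by positivity),
              ofReal_norm]
            gcongr
          · have : fderiv ℝ u (t • x) = 0 := by
              have h1 : t • x ∉ tsupport u := fun h => htx (hsupp h)
              by_contra hne
              exact h1 (support_fderiv_subset ℝ hne)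
            have h2 : ‖fderiv ℝ u (t • x)‖ₑ = 0 := by
              rw [← ofReal_norm, this, norm_zero, ENNReal.ofReal_zero]
            rw [h2, mul_zero]
            exact zero_le
      _ = (∫⁻ t in Ioi (1:ℝ), G (t • x) ^ (1/q)) * ‖x‖ₑ := by
          rw [lintegral_mul_const' _ _ enorm_ne_top]
  have hmain : ∫⁻ x in Ω, ENNReal.ofReal (a x * |u x| ^ q / ‖x‖ ^ q) ≤
      ENNReal.ofReal ((q / (N - q)) ^ q * ∫ x in Ω, a x * ‖fderiv ℝ u x‖ ^ q) := by
    calc ∫⁻ x in Ω, ENNReal.ofReal (a x * |u x| ^ q / ‖x‖ ^ q)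
        ≤ ∫⁻ x in Ω, (∫⁻ t in Ioi (1:ℝ), G (t • x) ^ (1/q)) ^ q :=
          setLIntegral_mono' hΩopen.measurableSet hpt
      _ ≤ ∫⁻ x, (∫⁻ t in Ioi (1:ℝ), G (t • x) ^ (1/q)) ^ q := setLIntegral_le_lintegral _ _
      _ ≤ ∫⁻ x, ENNReal.ofReal (q / (N - q)) ^ (q - 1) *
            ∫⁻ t in Ioi (1:ℝ), ENNReal.ofReal (t ^ ((N:ℝ) - N/q)) * G (t • x) := by
          refine lintegral_mono fun x => ?_
          exact hardy_holder hq1 hqN (fun t => G (t • x)) (hGm.comp (by fun_prop))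
      _ = ENNReal.ofReal (q / (N - q)) ^ (q - 1) *
            ∫⁻ x, ∫⁻ t in Ioi (1:ℝ), ENNReal.ofReal (t ^ ((N:ℝ) - N/q)) * G (t • x) := by
          rw [lintegral_const_mul' _ _ (ENNReal.rpow_ne_top_of_nonneg (by linarith) ENNReal.ofReal_ne_top)]
      _ = ENNReal.ofReal (q / (N - q)) ^ (q - 1) *
            ∫⁻ t in Ioi (1:ℝ), ∫⁻ x, ENNReal.ofReal (t ^ ((N:ℝ) - N/q)) * G (t • x) := by
          rw [lintegral_lintegral_swap]
          have : Measurable fun p : EuclideanSpace ℝ (Fin N) × ℝ => G (p.2 • p.1) :=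
            hGm.comp (by fun_prop)
          exact ((by fun_prop : Measurable fun p : EuclideanSpace ℝ (Fin N) × ℝ =>
            ENNReal.ofReal (p.2 ^ ((N:ℝ) - N/q))).mul this).aemeasurable
      _ = ENNReal.ofReal (q / (N - q)) ^ (q - 1) *
            ∫⁻ t in Ioi (1:ℝ), ENNReal.ofReal (t ^ (-((N:ℝ)/q))) * ∫⁻ x, G x := by
          congr 1
          refine setLIntegral_congr_fun measurableSet_Ioi fun t ht => ?_
          have ht1 : 1 < t := ht
          have ht0 : 0 < t := by linarith
          change ∫⁻ x, ENNReal.ofReal (t ^ ((N:ℝ) - N/q)) * G (t • x) = _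
          rw [lintegral_const_mul' _ _ ENNReal.ofReal_ne_top, hardy_scale G hGm ht0, ← mul_assoc,
            ← ENNReal.ofReal_mul (by positivity), ← Real.rpow_add ht0]
          congr 3
          ring
      _ = ENNReal.ofReal (q / (N - q)) ^ (q - 1) * (ENNReal.ofReal (q / (N - q)) * ∫⁻ x, G x) := by
          rw [lintegral_mul_const _ (by fun_prop), hardy_pow hq0 hqN]
      _ = ENNReal.ofReal ((q / (N - q)) ^ q * ∫ x in Ω, a x * ‖fderiv ℝ u x‖ ^ q) := by
          rw [hGint, ENNReal.ofReal_rpow_of_pos hK, ← mul_assoc, ← ENNReal.ofReal_mul (by positivity),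
            ← ENNReal.ofReal_mul (by positivity)]
          congr 2
          rw [Real.rpow_sub_one hK.ne', div_mul_cancel₀ _ hK.ne']
  have hR : 0 ≤ (q / (N - q)) ^ q * ∫ x in Ω, a x * ‖fderiv ℝ u x‖ ^ q :=
    mul_nonneg (by positivity) (setIntegral_nonneg hΩopen.measurableSet hnn)
  by_cases hL : IntegrableOn (fun x => a x * |u x| ^ q / ‖x‖ ^ q) Ω
  · rw [← ENNReal.ofReal_le_ofReal_iff hR, ofReal_integral_eq_lintegral_ofReal hL]
    · exact hmain
    · refine (ae_restrict_iff' hΩopen.measurableSet).2 (.of_forall fun x hx => ?_)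
      have := hapos x (subset_closure hx)
      simp only [Pi.zero_apply]
      positivity
  · rw [integral_undef hL]; exact hR
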